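/- arXiv:2602.06029 — 3 statements merged into one kernel-verified Lean document; each statement's English description precedes it below -/
import Mathlib

section
/- Let σ > 0, μ ∈ ℝ, ζ ≥ 0, L ≥ 0, let r : ℝ → ℝ be Lipschitz continuous with constant L, and let f ∈ ℝ satisfy |f − μ| ≤ ζ^{1/2}·σ. If Y is distributed according to the Gaussian measure N(μ, σ²) on ℝ, then E[|r(f) − r(Y)|] ≤ L·(ζ^{1/2} + √(2/π))·σ. (The full 'Term 3' bound in the proof of Lemma B.4, using the smoothness-of-task assumption.) -/
open MeasureTheory ProbabilityTheory Real

open scoped NNReal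

/-- The mean absolute deviation of a real Gaussian with variance `v` is `√(2 * v / π)`. -/
lemma integral_abs_sub_gaussianReal (μ : ℝ) (v : ℝ≥0) :
    ∫ y, |y - μ| ∂(gaussianReal μ v) = √(2 * v / π) := by
  rcases eq_or_ne v 0 with rfl | hv
  · simp
  have hv' : (0 : ℝ) < v := by exact_mod_cast pos_iff_ne_zero.mpr hv
  have hhalf : ∫ x in Set.Ioi (0 : ℝ), x * exp (-x ^ 2 / (2 * v)) = v := by
    have h := integral_rpow_mul_exp_neg_mul_rpow (p := 2) (q := 1) (b := (2 * (v : ℝ))⁻¹)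
      (by norm_num) (by norm_num) (by positivity)
    norm_num [Real.rpow_neg_one] at h
    rw [show (v : ℝ) = 2 * v * (1 / 2) by ring]
    convert h using 1
    refine integral_congr_ae (.of_forall fun x ↦ ?_)
    ring_nf
  have hfull : ∫ x : ℝ, |x| * exp (-x ^ 2 / (2 * v)) = 2 * v := by
    have h := integral_comp_abs (f := fun x : ℝ ↦ x * exp (-x ^ 2 / (2 * v)))
    simpa only [sq_abs, hhalf] using h
  have hshift : ∫ x : ℝ, |x - μ| * exp (-(x - μ) ^ 2 / (2 * v)) = 2 * v :=
    (integral_sub_right_eq_self (fun x : ℝ ↦ |x| * exp (-x ^ 2 / (2 * v))) μ).trans hfull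
  calc ∫ y, |y - μ| ∂(gaussianReal μ v)
      = ∫ y, (√(2 * π * v))⁻¹ * (|y - μ| * exp (-(y - μ) ^ 2 / (2 * v))) := by
        rw [integral_gaussianReal_eq_integral_smul hv]
        refine integral_congr_ae (.of_forall fun x ↦ ?_)
        simp only [gaussianPDFReal, smul_eq_mul]
        ring
    _ = (√(2 * π * v))⁻¹ * (2 * v) := by rw [integral_const_mul, hshift]
    _ = √(2 * v / π) := by
        symm
        rw [Real.sqrt_eq_iff_mul_self_eq (by positivity) (by positivity), ← sq, mul_pow, inv_pow,
          Real.sq_sqrt (by positivity)]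
        field_simp

/-- The full 'Term 3' bound in Lemma B.4: for `L`-Lipschitz regret `r`,
if `|f − μ| ≤ √ζ·σ` and `Y ~ N(μ, σ²)` then
`E[|r(f) − r(Y)|] ≤ L·(√ζ + √(2/π))·σ`. -/
theorem lipschitz_gaussian_regret_bound (σ μ ζ L f : ℝ) (r : ℝ → ℝ)
    (hσ : 0 < σ) (hζ : 0 ≤ ζ) (hL : 0 ≤ L)
    (hr : ∀ y₁ y₂ : ℝ, |r y₁ - r y₂| ≤ L * |y₁ - y₂|)
    (hf : |f - μ| ≤ ζ ^ ((1 : ℝ) / 2) * σ) :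
    ∫ y, |r f - r y| ∂(gaussianReal μ (Real.toNNReal (σ ^ 2))) ≤
      L * (ζ ^ ((1 : ℝ) / 2) + Real.sqrt (2 / π)) * σ := by
  set P := gaussianReal μ (Real.toNNReal (σ ^ 2)) with hP
  have hint : Integrable (fun y ↦ |y - μ|) P :=
    (((memLp_id_gaussianReal 1).integrable le_rfl).sub (integrable_const μ)).abs
  have habs : ∫ y, |y - μ| ∂P = √(2 / π) * σ := by
    rw [hP, integral_abs_sub_gaussianReal, Real.coe_toNNReal _ (sq_nonneg σ),
      mul_div_right_comm, Real.sqrt_mul (by positivity), Real.sqrt_sq hσ.le]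
  calc ∫ y, |r f - r y| ∂P
      ≤ ∫ y, L * (ζ ^ ((1 : ℝ) / 2) * σ + |y - μ|) ∂P := by
        refine integral_mono_of_nonneg (.of_forall fun y ↦ abs_nonneg _)
          (((integrable_const _).add hint).const_mul L) (.of_forall fun y ↦ ?_)
        refine (hr f y).trans (mul_le_mul_of_nonneg_left ?_ hL)
        have h := abs_sub_le f μ y
        rw [abs_sub_comm μ y] at h
        linarith
    _ = L * (ζ ^ ((1 : ℝ) / 2) + √(2 / π)) * σ := by
        rw [integral_const_mul, integral_add (integrable_const _) hint, habs]
        simp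
        ring
end

section
/- Let a > 0, T ∈ ℕ, and v₁, …, v_T ∈ [0, 1]. Define I_T := (1/2)·∑_{t=1}^{T} log(1 + a·v_t) and C := 2 / log(1 + a). Then ∑_{t=1}^{T} √(v_t) ≤ √(C · T · I_T). (The combination of the variance-to-information inequality with the Cauchy–Schwarz step in the proof of Theorem 2, bounding the sum of predictive standard deviations by the total information gain.) -/
open Real Finset

/-- Concavity of the logarithm along the chord from `1` to `1 + a`. -/
lemma mul_log_one_add_le_log_one_add_mul {a x : ℝ} (ha : -1 < a) (hx0 : 0 ≤ x) (hx1 : x ≤ 1) :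
    x * Real.log (1 + a) ≤ Real.log (1 + a * x) := by
  have hpos : 0 < 1 + a := by linarith
  rw [← Real.log_rpow hpos, mul_comm a x]
  exact Real.log_le_log (Real.rpow_pos_of_pos hpos x)
    (rpow_one_add_le_one_add_mul_self ha.le hx0 hx1)

/-- Cauchy–Schwarz combined with the variance-to-information inequality:
the sum of predictive standard deviations is bounded by `√(C·T·I_T)`,
where `I_T = (1/2)·∑ log(1 + a·v_t)` and `C = 2/log(1 + a)`. -/
theorem sum_sqrt_var_le_sqrt_info (a : ℝ) (T : ℕ) (v : ℕ → ℝ) (ha : 0 < a)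
    (hv0 : ∀ t ∈ Finset.range T, 0 ≤ v t)
    (hv1 : ∀ t ∈ Finset.range T, v t ≤ 1) :
    ∑ t ∈ Finset.range T, Real.sqrt (v t) ≤
      Real.sqrt ((2 / Real.log (1 + a)) * T *
        ((1 / 2) * ∑ t ∈ Finset.range T, Real.log (1 + a * v t))) := by
  have hlog : 0 < Real.log (1 + a) := Real.log_pos (by linarith)
  have hvar : ∑ t ∈ Finset.range T, v t ≤
      (∑ t ∈ Finset.range T, Real.log (1 + a * v t)) / Real.log (1 + a) := by
    rw [le_div_iff₀ hlog, Finset.sum_mul]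
    exact Finset.sum_le_sum fun t ht =>
      mul_log_one_add_le_log_one_add_mul (by linarith) (hv0 t ht) (hv1 t ht)
  apply Real.le_sqrt_of_sq_le
  calc (∑ t ∈ Finset.range T, Real.sqrt (v t)) ^ 2
      ≤ T * ∑ t ∈ Finset.range T, Real.sqrt (v t) ^ 2 := by
        simpa using sq_sum_le_card_mul_sum_sq (s := Finset.range T)
          (f := fun t => Real.sqrt (v t))
    _ = T * ∑ t ∈ Finset.range T, v t := by
        rw [Finset.sum_congr rfl fun t ht => Real.sq_sqrt (hv0 t ht)]
    _ ≤ T * ((∑ t ∈ Finset.range T, Real.log (1 + a * v t)) / Real.log (1 + a)) := by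
        gcongr
    _ = _ := by ring
end

section
/- Let T ∈ ℕ, a > 0, c ≥ 0, β̄ > 0, ρ ≥ 0, and let (v_t), (r_t), (B_t), (β_t) for t = 1, …, T be real sequences with v_t ∈ [0, 1], r_t ≥ 0, B_t ≥ 0, 0 < β_t ≤ β̄. Define I_t := (1/2)·log(1 + a·v_t) and assume ∑_{t=1}^{T} I_t ≤ ρ and, for each t, r_t ≤ β_t·I_t + c·√(v_t) + B_t. Then ∑_{t=1}^{T} r_t ≤ β̄·ρ + c·√(C·T·ρ) + ∑_{t=1}^{T} B_t, where C := 2/log(1 + a). (The deterministic summation core of Theorem 2: the cumulative regret bound R_T ≤ β̄_T·ρ_T + L(ζ_T^{1/2} + √(2/π))·√(C·T·ρ_T) + ∑ B_t.) -/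
open Real Finset

/-- Cauchy–Schwarz for a sum of square roots. -/
lemma sum_sqrt_le_sqrt_card_mul_sum {ι : Type*} (s : Finset ι) (f : ι → ℝ)
    (hf : ∀ i ∈ s, 0 ≤ f i) :
    ∑ i ∈ s, Real.sqrt (f i) ≤ Real.sqrt (s.card * ∑ i ∈ s, f i) := by
  apply Real.le_sqrt_of_sq_le
  calc (∑ i ∈ s, Real.sqrt (f i)) ^ 2 ≤ s.card * ∑ i ∈ s, Real.sqrt (f i) ^ 2 :=
        sq_sum_le_card_mul_sum_sq
    _ = s.card * ∑ i ∈ s, f i := by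
        rw [Finset.sum_congr rfl fun i hi => Real.sq_sqrt (hf i hi)]

/-- Deterministic summation core of Theorem 2 (cumulative regret bound):
`∑ r_t ≤ β̄·ρ + c·√(C·T·ρ) + ∑ B_t` with `C = 2/log(1 + a)`,
where `I_t = (1/2)·log(1 + a·v_t)`. Sequences are indexed by
`t ∈ {1, …, T}`. -/
theorem aif_cumulative_regret_core
    (T : ℕ) (a c βbar ρ : ℝ) (v r B β : ℕ → ℝ)
    (ha : 0 < a) (hc : 0 ≤ c) (hβbar : 0 < βbar) (hρ : 0 ≤ ρ)
    (hv0 : ∀ t ∈ Finset.Icc 1 T, 0 ≤ v t)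
    (hv1 : ∀ t ∈ Finset.Icc 1 T, v t ≤ 1)
    (hr : ∀ t ∈ Finset.Icc 1 T, 0 ≤ r t)
    (hB : ∀ t ∈ Finset.Icc 1 T, 0 ≤ B t)
    (hβpos : ∀ t ∈ Finset.Icc 1 T, 0 < β t)
    (hβle : ∀ t ∈ Finset.Icc 1 T, β t ≤ βbar)
    (hinfo : ∑ t ∈ Finset.Icc 1 T, (1 / 2) * Real.log (1 + a * v t) ≤ ρ)
    (hstep : ∀ t ∈ Finset.Icc 1 T,
      r t ≤ β t * ((1 / 2) * Real.log (1 + a * v t)) + c * Real.sqrt (v t) + B t) :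
    ∑ t ∈ Finset.Icc 1 T, r t ≤
      βbar * ρ + c * Real.sqrt ((2 / Real.log (1 + a)) * T * ρ) +
        ∑ t ∈ Finset.Icc 1 T, B t := by
  have hlog : 0 < Real.log (1 + a) := Real.log_pos (by linarith)
  have hinfo_nonneg : ∀ t ∈ Finset.Icc 1 T, 0 ≤ (1 / 2) * Real.log (1 + a * v t) := fun t ht =>
    mul_nonneg (by norm_num)
      (Real.log_nonneg (le_add_of_nonneg_right (mul_nonneg ha.le (hv0 t ht))))
  have hv_sum : ∑ t ∈ Finset.Icc 1 T, v t ≤ 2 / Real.log (1 + a) * ρ := by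
    rw [div_mul_eq_mul_div, le_div_iff₀ hlog, Finset.sum_mul]
    calc ∑ t ∈ Finset.Icc 1 T, v t * Real.log (1 + a)
        ≤ ∑ t ∈ Finset.Icc 1 T, 2 * ((1 / 2) * Real.log (1 + a * v t)) := by
          refine Finset.sum_le_sum fun t ht => ?_
          linarith [mul_log_one_add_le_log_one_add_mul (by linarith : -1 < a) (hv0 t ht) (hv1 t ht)]
      _ ≤ 2 * ρ := by
          rw [← Finset.mul_sum]
          exact mul_le_mul_of_nonneg_left hinfo zero_le_two
  have hsqrt : ∑ t ∈ Finset.Icc 1 T, Real.sqrt (v t) ≤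
      Real.sqrt ((2 / Real.log (1 + a)) * T * ρ) := by
    refine (sum_sqrt_le_sqrt_card_mul_sum _ v hv0).trans (Real.sqrt_le_sqrt ?_)
    rw [Nat.card_Icc, Nat.add_sub_cancel]
    calc (T : ℝ) * ∑ t ∈ Finset.Icc 1 T, v t ≤ T * (2 / Real.log (1 + a) * ρ) :=
          mul_le_mul_of_nonneg_left hv_sum T.cast_nonneg
      _ = (2 / Real.log (1 + a)) * T * ρ := by ring
  calc ∑ t ∈ Finset.Icc 1 T, r t
      ≤ ∑ t ∈ Finset.Icc 1 T,
          (βbar * ((1 / 2) * Real.log (1 + a * v t)) + c * Real.sqrt (v t) + B t) := by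
        refine Finset.sum_le_sum fun t ht => (hstep t ht).trans ?_
        linarith [mul_le_mul_of_nonneg_right (hβle t ht) (hinfo_nonneg t ht)]
    _ = βbar * ∑ t ∈ Finset.Icc 1 T, (1 / 2) * Real.log (1 + a * v t) +
          c * ∑ t ∈ Finset.Icc 1 T, Real.sqrt (v t) + ∑ t ∈ Finset.Icc 1 T, B t := by
        rw [Finset.sum_add_distrib, Finset.sum_add_distrib, Finset.mul_sum, Finset.mul_sum]
    _ ≤ _ := by gcongr
end
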